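/- arXiv:1212.4978 — 2 statements merged into one kernel-verified Lean document; each statement's English description precedes it below -/
import Mathlib

section
/- Let K be a field of characteristic ≠ 2 and let λ ∈ K with λ ≠ 1. Set v := (1−λ)/2. Let x11, x12, x21, y11, y12, y21, β ∈ K and define the 2×2 matrices A := [[(λ+1)/2 + x11, x12], [x21, (λ+1)/2 − x11]] and B := [[β + y11, y12], [y21, β − y11]]. Define I1 := (v+x11)·(v−x11) − x12·x21, I2 := (v+x11)²·y12 − 2·(v+x11)·x12·y11 − x12²·y21, I3 := x21²·y12 − 2·x21·(v−x11)·y11 − (v−x11)²·y21, I4 := (v+x11)·x21·y12 − 2·x12·x21·y11 − x12·(v−x11)·y21. Then there exists a nonzero vector w ∈ K² such that A·w = λ·w and B·w is a scalar multiple of w, if and only if I1 = 0, I2 = 0, I3 = 0 and I4 = 0. -/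
/-!
Put `M = A - λ`. If `adj M ≠ 0`, the kernel of `M` is at most a line, and when `det M = 0` it
contains every column of `adj M`. An eigenvector of `A` for `λ` is therefore also one of `B` exactly
when `B` maps it back into `ker M`, so it exists if and only if `det M = 0` and `M * B * adj M = 0`.
In the theorem `tr M = 1 - λ ≠ 0` gives `adj M ≠ 0`, and `I1 = det M`, while modulo `I1` the entries
of `M * B * adj M` are `-I4`, `I2`, `-I3` and `I4`.
-/

section

open Matrix

variable {n R K : Type*} [Fintype n] [DecidableEq n] [CommRing R] [Field K]

lemma eq_zero_of_mulVec_eq_zero_of_adjugate_apply_ne_zero [NoZeroDivisors R] {M : Matrix n n R}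
    {i j : n} (hij : M.adjugate i j ≠ 0) {u : n → R} (hu : M *ᵥ u = 0) (hui : u i = 0) : u = 0 := by
  rw [adjugate_apply] at hij
  refine eq_zero_of_mulVec_eq_zero hij (funext fun k ↦ ?_)
  obtain rfl | hkj := eq_or_ne k j
  · simp [mulVec, hui]
  · simpa [mulVec, hkj] using congrFun hu k

lemma exists_eq_smul_of_mulVec_eq_zero {M : Matrix n n K} (hM : M.adjugate ≠ 0) {u w : n → K}
    (hw : w ≠ 0) (hMw : M *ᵥ w = 0) (hMu : M *ᵥ u = 0) : ∃ c : K, u = c • w := by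
  obtain ⟨i, j, hij⟩ : ∃ i j, M.adjugate i j ≠ 0 := by
    contrapose! hM
    exact Matrix.ext hM
  have hwi : w i ≠ 0 := mt (eq_zero_of_mulVec_eq_zero_of_adjugate_apply_ne_zero hij hMw) hw
  refine ⟨u i / w i, sub_eq_zero.1 <|
    eq_zero_of_mulVec_eq_zero_of_adjugate_apply_ne_zero hij ?_ ?_⟩
  · rw [mulVec_sub, mulVec_smul, hMu, hMw, smul_zero, sub_zero]
  · simp [hwi]

lemma mulVec_adjugate_mulVec_eq_zero {M : Matrix n n R} (hM : M.det = 0) (u : n → R) :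
    M *ᵥ (M.adjugate *ᵥ u) = 0 := by
  rw [mulVec_mulVec, mul_adjugate, hM, zero_smul, zero_mulVec]

lemma exists_mulVec_eq_smul_iff_mulVec_mulVec_eq_zero {M : Matrix n n K} (hM : M.adjugate ≠ 0)
    (B : Matrix n n K) {w : n → K} (hw : w ≠ 0) (hMw : M *ᵥ w = 0) :
    (∃ μ : K, B *ᵥ w = μ • w) ↔ M *ᵥ (B *ᵥ w) = 0 := by
  refine ⟨?_, exists_eq_smul_of_mulVec_eq_zero hM hw hMw⟩
  rintro ⟨μ, hμ⟩
  rw [hμ, mulVec_smul, hMw, smul_zero]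

lemma exists_mulVec_eq_zero_and_mulVec_eq_smul_iff {M : Matrix n n K} (hM : M.adjugate ≠ 0)
    (B : Matrix n n K) :
    (∃ w : n → K, w ≠ 0 ∧ M *ᵥ w = 0 ∧ ∃ μ : K, B *ᵥ w = μ • w) ↔
      M.det = 0 ∧ M * B * M.adjugate = 0 := by
  constructor
  · rintro ⟨w, hw, hMw, hBw⟩
    have hdet : M.det = 0 := exists_mulVec_eq_zero_iff.1 ⟨w, hw, hMw⟩
    refine ⟨hdet, ext_of_mulVec_single fun j ↦ ?_⟩
    obtain ⟨c, hc⟩ : ∃ c : K, M.adjugate *ᵥ Pi.single j 1 = c • w :=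
      exists_eq_smul_of_mulVec_eq_zero hM hw hMw (mulVec_adjugate_mulVec_eq_zero hdet _)
    have hMBw : M *ᵥ (B *ᵥ w) = 0 :=
      (exists_mulVec_eq_smul_iff_mulVec_mulVec_eq_zero hM B hw hMw).1 hBw
    rw [← mulVec_mulVec, ← mulVec_mulVec, hc, mulVec_smul, mulVec_smul, hMBw, smul_zero,
      zero_mulVec]
  · rintro ⟨hdet, hMB⟩
    obtain ⟨j, hj⟩ : ∃ j, M.adjugate *ᵥ Pi.single j 1 ≠ 0 := by
      contrapose! hM
      exact ext_of_mulVec_single fun j ↦ by rw [hM, zero_mulVec]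
    have hcol : M *ᵥ (M.adjugate *ᵥ Pi.single j 1) = 0 := mulVec_adjugate_mulVec_eq_zero hdet _
    refine ⟨_, hj, hcol, (exists_mulVec_eq_smul_iff_mulVec_mulVec_eq_zero hM B hj hcol).2 ?_⟩
    rw [mulVec_mulVec, mulVec_mulVec, hMB, zero_mulVec]

lemma exists_common_eigenvector_iff {A : Matrix n n K} {lam : K}
    (hA : (A - lam • 1).adjugate ≠ 0) (B : Matrix n n K) :
    (∃ w : n → K, w ≠ 0 ∧ A *ᵥ w = lam • w ∧ ∃ μ : K, B *ᵥ w = μ • w) ↔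
      (A - lam • 1).det = 0 ∧ (A - lam • 1) * B * (A - lam • 1).adjugate = 0 := by
  rw [← exists_mulVec_eq_zero_and_mulVec_eq_smul_iff hA B]
  simp only [sub_mulVec, smul_mulVec, one_mulVec, sub_eq_zero]

lemma adjugate_ne_zero_of_trace_ne_zero {M : Matrix (Fin 2) (Fin 2) R} (hM : M.trace ≠ 0) :
    M.adjugate ≠ 0 := by
  contrapose! hM
  simpa [adjugate_fin_two, trace_fin_two, add_comm] using congrArg trace hM

lemma mul_mul_adjugate_fin_two (p q r s β y11 y12 y21 : R) :
    !![p, r; s, q] * !![β + y11, y12; y21, β - y11] *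
        (!![p, r; s, q] : Matrix (Fin 2) (Fin 2) R).adjugate =
      (p * q - r * s) • !![β + y11, 0; 0, β - y11] +
        !![-(p * s * y12 - 2 * r * s * y11 - r * q * y21),
            p ^ 2 * y12 - 2 * p * r * y11 - r ^ 2 * y21;
          -(s ^ 2 * y12 - 2 * s * q * y11 - q ^ 2 * y21),
            p * s * y12 - 2 * r * s * y11 - r * q * y21] := by
  rw [adjugate_fin_two_of]
  ext i j
  fin_cases i <;> fin_cases j <;> simp <;> ring

lemma det_eq_zero_and_mul_mul_adjugate_eq_zero_iff_fin_two (p q r s β y11 y12 y21 : R) :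
    (!![p, r; s, q] : Matrix (Fin 2) (Fin 2) R).det = 0 ∧
        !![p, r; s, q] * !![β + y11, y12; y21, β - y11] *
          (!![p, r; s, q] : Matrix (Fin 2) (Fin 2) R).adjugate = 0 ↔
      p * q - r * s = 0 ∧ p ^ 2 * y12 - 2 * p * r * y11 - r ^ 2 * y21 = 0 ∧
        s ^ 2 * y12 - 2 * s * q * y11 - q ^ 2 * y21 = 0 ∧
        p * s * y12 - 2 * r * s * y11 - r * q * y21 = 0 := by
  rw [det_fin_two_of, mul_mul_adjugate_fin_two]
  refine and_congr_right fun hdet ↦ ?_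
  rw [hdet, zero_smul, zero_add, ← Matrix.ext_iff]
  simp only [Fin.forall_fin_two, of_apply, cons_val_zero, cons_val_one, Matrix.zero_apply,
    neg_eq_zero]
  tauto

end

/-- The linear-algebra core of Lemma 2: the matrix `A` (of determinant `λ`) has a
common eigenvector with `B` on which `A` acts by `λ`, iff `I1 = I2 = I3 = I4 = 0`. -/
theorem stmt_0 (K : Type*) [Field K] (htwo : (2 : K) ≠ 0)
    (lam : K) (hlam : lam ≠ 1)
    (x11 x12 x21 y11 y12 y21 β : K)
    (v : K) (hv : v = (1 - lam) / 2)
    (A B : Matrix (Fin 2) (Fin 2) K)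
    (hA : A = !![(lam + 1) / 2 + x11, x12; x21, (lam + 1) / 2 - x11])
    (hB : B = !![β + y11, y12; y21, β - y11])
    (I1 I2 I3 I4 : K)
    (hI1 : I1 = (v + x11) * (v - x11) - x12 * x21)
    (hI2 : I2 = (v + x11) ^ 2 * y12 - 2 * (v + x11) * x12 * y11 - x12 ^ 2 * y21)
    (hI3 : I3 = x21 ^ 2 * y12 - 2 * x21 * (v - x11) * y11 - (v - x11) ^ 2 * y21)
    (hI4 : I4 = (v + x11) * x21 * y12 - 2 * x12 * x21 * y11 - x12 * (v - x11) * y21) :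
    (∃ w : Fin 2 → K, w ≠ 0 ∧ A.mulVec w = lam • w ∧ ∃ μ : K, B.mulVec w = μ • w) ↔
      (I1 = 0 ∧ I2 = 0 ∧ I3 = 0 ∧ I4 = 0) := by
  have hM : A - lam • 1 = !![v + x11, x12; x21, v - x11] := by
    rw [hA, hv, Matrix.one_fin_two]
    ext i j
    fin_cases i <;> fin_cases j <;> simp <;> field_simp <;> ring
  have htrace : (A - lam • 1).trace = 1 - lam := by
    rw [hM, Matrix.trace_fin_two_of, hv]
    field_simp
    ring
  have hadj : (A - lam • 1).adjugate ≠ 0 :=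
    adjugate_ne_zero_of_trace_ne_zero (htrace ▸ sub_ne_zero.2 hlam.symm)
  rw [exists_common_eigenvector_iff hadj, hM, hB,
    det_eq_zero_and_mul_mul_adjugate_eq_zero_iff_fin_two, hI1, hI2, hI3, hI4]
end

section
/- Let k be a field of characteristic p > 2. The quotient of the polynomial ring k[x11, x12, x21, y11, y12, y21] by the ideal generated by x11² + x12·x21 and x21·y12 + 2·x11·y11 + x12·y21 is an integral domain. -/
open MvPolynomial

/-!
Write `a, b, c, d, e, f` for the variables `X 0, …, X 5` over a domain `R`. Where `b` is invertible,
both relations can be solved: with `u = a / b` they say `c = -b u²` and `f = u² e - 2 u d`. Hence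
the ideal `I` of the relations becomes prime after inverting `b`, with quotient
`R[b⁻¹, b, u, d, e]`, and it remains to see that `b` is a nonzerodivisor modulo `I`.

Let `F = a² + b c` and `J = c e + 2 a d + b f` be the relations. Since `(b)` and `(b, a)` are prime
ideals not containing `a` and `J`, respectively, the sequence `b, a, J` is regular. Regular
sequences cannot be permuted freely, but an element followed by another one stays regular modulo
the latter. So `a` is regular modulo `(b, J)`, hence so is `a²`, which is `F` there. Thus the
sequence `b, J, F` is regular, and moving `b` first past `J` and then past `F` shows that `b` is
regular modulo `I`.
-/

section Regular

variable {A : Type*} [CommRing A]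

lemma isSMulRegular_quotient_of_notMem_prime {P : Ideal A} (hP : P.IsPrime) {x : A} (hx : x ∉ P) :
    IsSMulRegular (A ⧸ P) x :=
  (isSMulRegular_quotient_iff_mem_of_smul_mem P x).2 fun _ h ↦ (hP.mem_or_mem h).resolve_left hx

lemma isSMulRegular_quotient_congr {I : Ideal A} {x y : A} (h : x - y ∈ I) :
    IsSMulRegular (A ⧸ I) x ↔ IsSMulRegular (A ⧸ I) y := by
  simp only [isSMulRegular_quotient_iff_mem_of_smul_mem, smul_eq_mul]
  refine forall_congr' fun z ↦ imp_congr_left ?_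
  rw [← sub_add_cancel x y, add_mul, I.add_mem_iff_right (I.mul_mem_right z h)]

lemma isSMulRegular_quotient_sup_span_swap {I : Ideal A} {x y : A} (hx : IsSMulRegular (A ⧸ I) x)
    (hy : IsSMulRegular (A ⧸ (I ⊔ Ideal.span {x})) y) :
    IsSMulRegular (A ⧸ (I ⊔ Ideal.span {y})) x := by
  simp only [isSMulRegular_quotient_iff_mem_of_smul_mem, smul_eq_mul, Submodule.mem_sup,
    Ideal.mem_span_singleton', exists_exists_eq_and] at hx hy ⊢
  rintro w ⟨i, hi, v, hw⟩
  obtain ⟨j, hj, v', rfl⟩ := hy v ⟨-i, neg_mem hi, w, by linear_combination -hw⟩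
  have hw' : w - v' * y ∈ I := by
    refine hx _ ?_
    rw [show x * (w - v' * y) = i + j * y by linear_combination -hw]
    exact add_mem hi (I.mul_mem_right y hj)
  exact ⟨_, hw', v', sub_add_cancel _ _⟩

end Regular

lemma isPrime_span_X_image {σ R : Type*} [CommRing R] [IsDomain R] (s : Set σ) :
    (Ideal.span (X '' s : Set (MvPolynomial σ R))).IsPrime := by
  classical
  let kill : MvPolynomial σ R →ₐ[R] MvPolynomial σ R := aeval fun i ↦ if i ∈ s then 0 else X i
  have mk_kill : (Ideal.Quotient.mkₐ R (Ideal.span (X '' s))).comp kill =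
      Ideal.Quotient.mkₐ R (Ideal.span (X '' s)) := by
    ext i
    by_cases hi : i ∈ s
    · simpa [kill, hi] using (Ideal.Quotient.eq_zero_iff_mem.2
        (Ideal.subset_span (Set.mem_image_of_mem X hi))).symm
    · simp [kill, hi]
  have ker_kill : Ideal.span (X '' s) = RingHom.ker kill := by
    refine le_antisymm (Ideal.span_le.2 ?_) fun P hP ↦ ?_
    · rintro _ ⟨i, hi, rfl⟩
      simp [kill, hi]
    · have h := DFunLike.congr_fun mk_kill P
      rw [AlgHom.comp_apply, RingHom.mem_ker.1 hP, map_zero] at h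
      exact Ideal.Quotient.eq_zero_iff_mem.1 h.symm
  rw [ker_kill]
  exact RingHom.ker_isPrime kill

namespace NilpotentCone

section Relations

variable (R : Type*) [CommRing R]

/-- The equation `a² + b c` of the nilpotent cone in `sl₂`, i.e. minus the determinant of the
traceless matrix with first row `(a, b)` and second row `(c, -a)`. -/
noncomputable def coneEq : MvPolynomial (Fin 6) R := X 0 ^ 2 + X 1 * X 2

/-- The differential of `coneEq` at the point `(a, b, c) = (X 0, X 1, X 2)`, applied to the vector
`(d, e, f) = (X 3, X 4, X 5)`. -/
noncomputable def tangentEq : MvPolynomial (Fin 6) R := X 2 * X 4 + 2 * X 0 * X 3 + X 1 * X 5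

/-- The ideal of pairs consisting of a point of the nilpotent cone and a tangent vector there. -/
noncomputable def tangentIdeal : Ideal (MvPolynomial (Fin 6) R) :=
  Ideal.span {coneEq R, tangentEq R}

/-- The birational parametrization `(a, b, c, d, e, f) = (b u, b, -b u², d, e, u² e - 2 u d)` of the
tangent pairs, where `b, u, d, e` are the variables `X 0, …, X 3`. -/
noncomputable def param : Fin 6 → MvPolynomial (Fin 4) R :=
  ![X 0 * X 1, X 0, -(X 0 * X 1 ^ 2), X 2, X 3, X 1 ^ 2 * X 3 - 2 * X 1 * X 2]

end Relations

section Regular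

variable {R : Type*} [CommRing R]

lemma tangentEq_notMem_span_X_one_sup_span_X_zero [Nontrivial R] :
    tangentEq R ∉ Ideal.span {X 1} ⊔ Ideal.span {X 0} := by
  rw [← Ideal.span_insert, Ideal.mem_span_pair]
  rintro ⟨P, Q, h⟩
  simpa [tangentEq] using congrArg (eval ![0, 0, 1, 0, 1, 0]) h

variable [IsDomain R]

lemma isSMulRegular_quotient_span_X_one_sup_span_tangentEq :
    IsSMulRegular (MvPolynomial (Fin 6) R ⧸ (Ideal.span {X 1} ⊔ Ideal.span {tangentEq R}))
      (X 0 : MvPolynomial (Fin 6) R) := by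
  have isPrime_b : (Ideal.span {(X 1 : MvPolynomial (Fin 6) R)}).IsPrime :=
    Ideal.isPrime_span_singleton_of_prime X_prime
  have isPrime_ba :
      (Ideal.span {(X 1 : MvPolynomial (Fin 6) R)} ⊔ Ideal.span {X 0}).IsPrime := by
    simpa [Set.image_pair, Ideal.span_insert] using isPrime_span_X_image (R := R) {(1 : Fin 6), 0}
  refine isSMulRegular_quotient_sup_span_swap
    (isSMulRegular_quotient_of_notMem_prime isPrime_b ?_)
    (isSMulRegular_quotient_of_notMem_prime isPrime_ba
      tangentEq_notMem_span_X_one_sup_span_X_zero)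
  simp [Ideal.mem_span_singleton, X_dvd_X]

lemma isSMulRegular_quotient_tangentIdeal :
    IsSMulRegular (MvPolynomial (Fin 6) R ⧸ tangentIdeal R) (X 1 : MvPolynomial (Fin 6) R) := by
  have isPrime_b : (Ideal.span {(X 1 : MvPolynomial (Fin 6) R)}).IsPrime :=
    Ideal.isPrime_span_singleton_of_prime X_prime
  have regular_J : IsSMulRegular
      (MvPolynomial (Fin 6) R ⧸ (⊥ ⊔ Ideal.span {(X 1 : MvPolynomial (Fin 6) R)}))
      (tangentEq R) := by
    rw [bot_sup_eq]
    exact isSMulRegular_quotient_of_notMem_prime isPrime_b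
      fun h ↦ tangentEq_notMem_span_X_one_sup_span_X_zero (Ideal.mem_sup_left h)
  have regular_b : IsSMulRegular (MvPolynomial (Fin 6) R ⧸ Ideal.span {tangentEq R})
      (X 1 : MvPolynomial (Fin 6) R) := by
    rw [← bot_sup_eq (Ideal.span {tangentEq R})]
    exact isSMulRegular_quotient_sup_span_swap
      (isSMulRegular_quotient_of_notMem_prime Ideal.isPrime_bot (X_ne_zero 1)) regular_J
  have regular_F : IsSMulRegular
      (MvPolynomial (Fin 6) R ⧸ (Ideal.span {tangentEq R} ⊔ Ideal.span {X 1})) (coneEq R) := by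
    rw [sup_comm]
    refine (isSMulRegular_quotient_congr ?_).1
      (isSMulRegular_quotient_span_X_one_sup_span_tangentEq.pow 2)
    exact Ideal.mem_sup_left (Ideal.mem_span_singleton.2 ⟨-X 2, by rw [coneEq]; ring⟩)
  rw [tangentIdeal, Ideal.span_insert, sup_comm]
  exact isSMulRegular_quotient_sup_span_swap regular_b regular_F

end Regular

section Parametrization

variable {R S : Type*} [CommRing R] [CommRing S] [Algebra R S]

lemma tangentIdeal_le_ker_aeval_param :
    tangentIdeal R ≤ RingHom.ker (aeval (R := R) (param R)) := by
  rw [tangentIdeal, Ideal.span_le]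
  rintro P (rfl | rfl) <;>
  · simp only [SetLike.mem_coe, RingHom.mem_ker, coneEq, tangentEq, map_add, map_mul, map_pow,
      map_ofNat, aeval_X]
    simp only [param, Matrix.cons_val]
    ring

lemma aeval_aeval_param {φ : MvPolynomial (Fin 6) R →ₐ[R] S} (hφ : tangentIdeal R ≤ RingHom.ker φ)
    {v : S} (hv : φ (X 1) * v = 1) (P : MvPolynomial (Fin 6) R) :
    aeval ![φ (X 1), φ (X 0) * v, φ (X 3), φ (X 4)] (aeval (param R) P) = φ P := by
  have hF : φ (coneEq R) = 0 := hφ (Ideal.subset_span (Set.mem_insert _ _))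
  have hJ : φ (tangentEq R) = 0 := hφ (Ideal.subset_span (Set.mem_insert_of_mem _ rfl))
  simp only [coneEq, tangentEq, map_add, map_mul, map_pow, map_ofNat] at hF hJ
  suffices h : (aeval ![φ (X 1), φ (X 0) * v, φ (X 3), φ (X 4)]).comp (aeval (param R)) = φ from
    DFunLike.congr_fun h P
  ext i
  fin_cases i <;> simp only [Fin.reduceFinMk, Fin.zero_eta, Fin.mk_one, param, Matrix.cons_val,
    AlgHom.comp_apply, aeval_X, map_mul, map_neg, map_sub, map_pow, map_ofNat]
  · linear_combination φ (X 0) * hv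
  · linear_combination (φ (X 2) - φ (X 0) ^ 2 * v) * hv - v * hF
  · linear_combination
      (φ (X 5) - v * φ (X 4) * φ (X 2)) * hv + v ^ 2 * φ (X 4) * hF - v * hJ

theorem tangentIdeal_eq_ker_aeval_param [IsDomain R] :
    tangentIdeal R = RingHom.ker (aeval (R := R) (param R)) := by
  refine le_antisymm tangentIdeal_le_ker_aeval_param fun P hP ↦ ?_
  let Q := MvPolynomial (Fin 6) R ⧸ tangentIdeal R
  let b : Q := Ideal.Quotient.mk _ (X 1)
  have hb : b ∈ nonZeroDivisors Q := mem_nonZeroDivisors_iff_right.2 fun w hw ↦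
    isSMulRegular_quotient_tangentIdeal.right_eq_zero_of_smul ((mul_comm b w).trans hw)
  have injective_Q : Function.Injective (algebraMap Q (Localization.Away b)) :=
    IsLocalization.injective _ (Submonoid.powers_le.2 hb)
  let φ := (IsScalarTower.toAlgHom R Q (Localization.Away b)).comp
    (Ideal.Quotient.mkₐ R (tangentIdeal R))
  have ker_φ : RingHom.ker φ = tangentIdeal R := by
    ext T
    exact (map_eq_zero_iff _ injective_Q).trans Ideal.Quotient.eq_zero_iff_mem
  rw [← ker_φ, RingHom.mem_ker, ← aeval_aeval_param ker_φ.ge (IsLocalization.Away.mul_invSelf b),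
    RingHom.mem_ker.1 hP, map_zero]

end Parametrization

end NilpotentCone

open NilpotentCone

theorem stmt_10_general (R : Type*) [CommRing R] [IsDomain R] :
    IsDomain (MvPolynomial (Fin 6) R ⧸ Ideal.span
      {(X 0 ^ 2 + X 1 * X 2 : MvPolynomial (Fin 6) R),
       X 2 * X 4 + 2 * X 0 * X 3 + X 1 * X 5}) := by
  change IsDomain (MvPolynomial (Fin 6) R ⧸ tangentIdeal R)
  rw [Ideal.Quotient.isDomain_iff_prime, tangentIdeal_eq_ker_aeval_param]
  exact RingHom.ker_isPrime _

/-- The graded-ring computation in the split case of Lemma 5: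
`k[x11, x12, x21, y11, y12, y21]/(x11² + x12·x21, x21·y12 + 2·x11·y11 + x12·y21)` is an
integral domain. Here `X 0 = x11`, `X 1 = x12`, `X 2 = x21`, `X 3 = y11`, `X 4 = y12`,
`X 5 = y21`. -/
theorem stmt_10 (p : ℕ) (hp : p.Prime) (hp2 : 2 < p)
    (k : Type*) [Field k] [CharP k p] :
    IsDomain (MvPolynomial (Fin 6) k ⧸ Ideal.span
      {(X 0 ^ 2 + X 1 * X 2 : MvPolynomial (Fin 6) k),
       X 2 * X 4 + 2 * X 0 * X 3 + X 1 * X 5}) :=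
  stmt_10_general k
end
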